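/- arXiv:2211.05210 — 7 statements merged into one kernel-verified Lean document; each statement's English description precedes it below -/
import Mathlib

section
/- Suppose p ≥ 1, α ∈ [1/(e−1), 1], and t satisfies either t = α^p/Γ(p+1), or t = α^p·p^p together with α^p·p^p ≥ 1. Then W(t, α) := (t^{t/(t+α)}/(t+α))·(α+1) ≤ √(2πp/e). -/
/-!
`log (W t α)` is the Kullback–Leibler divergence of the Bernoulli law with parameter `t / (t + α)`
from the one with parameter `1 / (1 + α)`; it vanishes at `t = 1` and has `t`-derivative
`α * log t / (t + α) ^ 2`.

For `t ≤ 1`, monotonicity in `t`, and in `α` when `t / α` is kept fixed, moves both variables to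
their smallest values, `Γ(p + 1)` being replaced by the factorial of the next integer. This leaves
one numerical check for each integer part `1, 2, 3` of `p`; for `p ≥ 4` the supremum
`1 + 1 / α ≤ e` of `W` already suffices.

For `t ≥ 1`, the divergence is at most the logarithm of one plus the chi-squared divergence
`α * ((t - 1) / (t + α)) ^ 2`, which is at most `1`; that is enough for `p ≥ 2`, and for `p ≤ 2`
one has `t ≤ p ^ p ≤ 4`, where it is at most `9 / 25`.
-/

open Real Set
open scoped Nat

/-- The function `W(t, α)` of the paper, meant for `t, α > 0`. -/
noncomputable def W (t α : ℝ) : ℝ := t ^ (t / (t + α)) / (t + α) * (α + 1)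

section

variable {t α p : ℝ}

lemma W_pos (ht : 0 < t) (hα : 0 < α) : 0 < W t α := by
  unfold W
  positivity

lemma W_le_one_add_mul_sq (ht : 0 < t) (hα : 0 < α) :
    W t α ≤ 1 + α * ((t - 1) / (t + α)) ^ 2 := by
  have amgm : t ^ (t / (t + α)) ≤ t / (t + α) * t + α / (t + α) := by
    simpa using geom_mean_le_arith_mean2_weighted (w₁ := t / (t + α)) (w₂ := α / (t + α))
      (by positivity) (by positivity) ht.le zero_le_one (by field_simp)
  calc W t α ≤ (t / (t + α) * t + α / (t + α)) / (t + α) * (α + 1) := by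
        unfold W
        gcongr
    _ = 1 + α * ((t - 1) / (t + α)) ^ 2 := by
        field_simp
        ring

lemma W_le_one_add_inv (ht : 0 < t) (ht1 : t ≤ 1) (hα : 0 < α) : W t α ≤ 1 + α⁻¹ :=
  calc W t α ≤ 1 / α * (α + 1) := by
        unfold W
        gcongr
        · exact rpow_le_one ht.le ht1 (by positivity)
        · linarith
    _ = 1 + α⁻¹ := by field_simp

lemma hasDerivAt_log_W (ht : 0 < t) (hα : 0 < α) :
    HasDerivAt (fun u ↦ log (W u α)) (α * log t / (t + α) ^ 2) t := by
  have log_W : (fun u ↦ u / (u + α) * log u - log (u + α) + log (α + 1))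
      =ᶠ[nhds t] fun u ↦ log (W u α) := by
    filter_upwards [eventually_gt_nhds ht] with u hu
    rw [W, log_mul (by positivity) (by positivity), log_div (by positivity) (by positivity),
      log_rpow hu]
  have hne : t + α ≠ 0 := by positivity
  have hadd : HasDerivAt (fun u ↦ u + α) 1 t := (hasDerivAt_id' t).add_const α
  have hquot : HasDerivAt (fun u ↦ u / (u + α)) (α / (t + α) ^ 2) t :=
    ((hasDerivAt_id' t).fun_div hadd hne).congr_deriv (by ring)
  refine HasDerivAt.congr_of_eventuallyEq ?_ log_W.symm
  refine (((hquot.fun_mul (hasDerivAt_log ht.ne')).fun_sub (hadd.log hne)).add_const _).congr_deriv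
    ?_
  field_simp
  ring

lemma antitoneOn_W (hα : 0 < α) : AntitoneOn (fun t ↦ W t α) (Ioc 0 1) := by
  have log_anti : AntitoneOn (fun t ↦ log (W t α)) (Ioc 0 1) := by
    refine antitoneOn_of_hasDerivWithinAt_nonpos (convex_Ioc 0 1)
      (fun t ht ↦ (hasDerivAt_log_W ht.1 hα).continuousAt.continuousWithinAt)
      (f' := fun t ↦ α * log t / (t + α) ^ 2) (fun t ht ↦ ?_) fun t ht ↦ ?_
    all_goals rw [interior_Ioc] at ht
    · exact (hasDerivAt_log_W ht.1 hα).hasDerivWithinAt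
    · exact div_nonpos_of_nonpos_of_nonneg
        (mul_nonpos_of_nonneg_of_nonpos hα.le (log_nonpos ht.1.le ht.2.le)) (sq_nonneg _)
  intro t ht u hu htu
  exact (log_le_log_iff (W_pos hu.1 hα) (W_pos ht.1 hα)).1 (log_anti ht hu htu)

lemma W_mul_eq {s : ℝ} (hs : 0 < s) (hα : 0 < α) :
    W (α * s) α = s ^ (s / (1 + s)) / (1 + s) * ((1 + α) / α ^ (1 / (1 + s))) := by
  have exponent : α * s / (α * s + α) = s / (1 + s) := by
    field_simp
    ring
  have complement : α ^ (s / (1 + s)) * α ^ (1 / (1 + s)) = α := by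
    rw [← rpow_add hα, ← add_div, add_comm s 1, div_self (by positivity), rpow_one]
  rw [W, exponent, mul_rpow hα.le hs.le]
  field_simp
  linear_combination (1 + s) * (1 + α) * complement

lemma antitoneOn_W_mul {s : ℝ} (hs : 0 < s) :
    AntitoneOn (fun α ↦ W (α * s) α) (Ioc 0 s⁻¹) := by
  rintro β ⟨hβ, -⟩ α ⟨hα, hαs⟩ hβα
  have hαs : α * s ≤ 1 := (le_inv_mul_iff₀' hs).1 (by simpa using hαs)
  have bernoulli : (β / α) ^ (1 / (1 + s)) ≤ (1 + β) / (1 + α) :=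
    calc (β / α) ^ (1 / (1 + s)) = (1 + (β / α - 1)) ^ (1 / (1 + s)) := by ring_nf
      _ ≤ 1 + 1 / (1 + s) * (β / α - 1) :=
        rpow_one_add_le_one_add_mul_self (by linarith [div_pos hβ hα]) (by positivity)
          (by rw [div_le_one (by positivity)]; linarith)
      _ = 1 - (α - β) / (α * (1 + s)) := by
        field_simp
        ring
      _ ≤ 1 - (α - β) / (1 + α) :=
        sub_le_sub_left (div_le_div_of_nonneg_left (sub_nonneg.2 hβα) (by positivity)
          (by linarith)) 1
      _ = (1 + β) / (1 + α) := by
        field_simp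
        ring
  simp only [W_mul_eq hs hα, W_mul_eq hs hβ]
  gcongr ?_ * ?_
  rw [div_rpow hβ.le hα.le, div_le_div_iff₀ (by positivity) (by positivity)] at bernoulli
  rw [div_le_div_iff₀ (by positivity) (by positivity)]
  linarith

lemma one_le_Gamma_add_one (hp : 1 ≤ p) : 1 ≤ Gamma (p + 1) := by
  have hp2 : 2 ≤ p + 1 := by linarith
  simpa only [Gamma_two] using Gamma_strictMonoOn_Ici.monotoneOn self_mem_Ici hp2 hp2

lemma pow_div_factorial_le_rpow_div_Gamma {n : ℕ} (hα : 0 < α) (hα1 : α ≤ 1) (hp : 1 ≤ p)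
    (hpn : p ≤ n) : α ^ n / n ! ≤ α ^ p / Gamma (p + 1) := by
  have hΓ : 0 < Gamma (p + 1) := by linarith [one_le_Gamma_add_one hp]
  rw [← Gamma_nat_eq_factorial, ← rpow_natCast]
  have hp2 : 2 ≤ p + 1 := by linarith
  have hpn2 : p + 1 ≤ n + 1 := by linarith
  exact div_le_div₀ (by positivity) (rpow_le_rpow_of_exponent_ge hα hα1 hpn) hΓ
    (Gamma_strictMonoOn_Ici.monotoneOn hp2 (hp2.trans hpn2) hpn2)

lemma W_le_W_pow_div_factorial {β : ℝ} {n : ℕ} (hβ : 0 < β) (hβα : β ≤ α) (hα1 : α ≤ 1)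
    (hp : 1 ≤ p) (hpn : p ≤ n + 1) (ht : α ^ p / Gamma (p + 1) ≤ t) (ht1 : t ≤ 1) :
    W t α ≤ W (β ^ (n + 1) / (n + 1)!) β := by
  have hα : 0 < α := hβ.trans_le hβα
  set s : ℝ := β ^ n / (n + 1)! with hs
  have s_pos : 0 < s := by positivity
  have αs_le : α * s ≤ t :=
    calc α * s ≤ α * (α ^ n / (n + 1)!) := by rw [hs]; gcongr
      _ = α ^ (n + 1) / (n + 1)! := by ring
      _ ≤ α ^ p / Gamma (p + 1) :=
        pow_div_factorial_le_rpow_div_Gamma hα hα1 hp (by exact_mod_cast hpn)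
      _ ≤ t := ht
  have α_le : α ≤ s⁻¹ := (le_div_iff₀ s_pos).2 (αs_le.trans ht1) |>.trans_eq (one_div s)
  calc W t α ≤ W (α * s) α :=
        antitoneOn_W hα ⟨by positivity, αs_le.trans ht1⟩ ⟨by linarith [mul_pos hα s_pos], ht1⟩ αs_le
    _ ≤ W (β * s) β := antitoneOn_W_mul s_pos ⟨hβ, hβα.trans α_le⟩ ⟨hα, α_le⟩ hβα
    _ = W (β ^ (n + 1) / (n + 1)!) β := by rw [hs, pow_succ', mul_div_assoc]

lemma W_le_of_pow_le_pow {c : ℝ} {m k : ℕ} (ht : 0 < t) (ht1 : t ≤ 1) (hα : 0 < α) (hc : 0 ≤ c)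
    (hk : k ≠ 0) (hmk : m / k ≤ t / (t + α)) (h : t ^ m ≤ c ^ k) :
    W t α ≤ c / (t + α) * (α + 1) := by
  have root : t ^ (t / (t + α)) ≤ c :=
    calc t ^ (t / (t + α)) ≤ t ^ (m / k : ℝ) := rpow_le_rpow_of_exponent_ge ht ht1 hmk
      _ = (t ^ m) ^ (k⁻¹ : ℝ) := by rw [div_eq_mul_inv, rpow_natCast_mul ht.le]
      _ ≤ (c ^ k) ^ (k⁻¹ : ℝ) := by gcongr
      _ = c := pow_rpow_inv_natCast hc hk
  unfold W
  gcongr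

lemma le_sqrt_two_pi_mul_div_exp_one {c : ℝ} (hp : 0 ≤ p) (h : c ^ 2 ≤ 2.311 * p) :
    c ≤ √(2 * π * p / exp 1) := by
  have const : 2.311 * exp 1 ≤ 2 * π := by linarith [pi_gt_d4, exp_one_lt_d9]
  refine le_sqrt_of_sq_le (h.trans ?_)
  rw [le_div_iff₀ (exp_pos 1)]
  linarith [mul_le_mul_of_nonneg_right const hp]

lemma le_one_div_exp_one_sub_one : (32 / 55 : ℝ) ≤ 1 / (exp 1 - 1) := by
  rw [le_div_iff₀ (by linarith [exp_one_gt_d9])]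
  linarith [exp_one_lt_d9]

lemma W_pow_div_factorial_le_sqrt {n : ℕ} (hn : 1 ≤ n) (hn3 : n ≤ 3) :
    W ((32 / 55) ^ (n + 1) / (n + 1)!) (32 / 55) ≤ √(2 * π * n / exp 1) := by
  -- The tight case is `n = 2`, where the two sides are about `2.144` and `2.150`; with `58 / 100`
  -- in place of `32 / 55` the inequality would fail.
  interval_cases n
  · refine (W_le_of_pow_le_pow (c := 0.72) (m := 1) (k := 5) ?_ ?_ ?_ ?_ ?_ ?_ ?_).trans
      (le_sqrt_two_pi_mul_div_exp_one ?_ ?_) <;> norm_num [Nat.factorial]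
  · refine (W_le_of_pow_le_pow (c := 0.835) (m := 4) (k := 75) ?_ ?_ ?_ ?_ ?_ ?_ ?_).trans
      (le_sqrt_two_pi_mul_div_exp_one ?_ ?_) <;> norm_num [Nat.factorial]
  · refine (W_le_of_pow_le_pow (c := 0.976) (m := 1) (k := 200) ?_ ?_ ?_ ?_ ?_ ?_ ?_).trans
      (le_sqrt_two_pi_mul_div_exp_one ?_ ?_) <;> norm_num [Nat.factorial]

lemma W_le_sqrt_of_le_one (hp : 1 ≤ p) (hα : 32 / 55 ≤ α) (hα1 : α ≤ 1)
    (ht : α ^ p / Gamma (p + 1) ≤ t) (ht1 : t ≤ 1) : W t α ≤ √(2 * π * p / exp 1) := by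
  have α_pos : 0 < α := by linarith
  have t_pos : 0 < t :=
    (div_pos (rpow_pos_of_pos α_pos p) (Gamma_pos_of_pos (by linarith))).trans_le ht
  rcases le_or_gt 4 p with hp4 | hp4
  · calc W t α ≤ 1 + α⁻¹ := W_le_one_add_inv t_pos ht1 α_pos
      _ ≤ 1 + (32 / 55)⁻¹ := by gcongr
      _ ≤ √(2 * π * p / exp 1) :=
        le_sqrt_two_pi_mul_div_exp_one (by linarith) (by norm_num; linarith)
  · calc W t α ≤ W ((32 / 55) ^ (⌊p⌋₊ + 1) / (⌊p⌋₊ + 1)!) (32 / 55) :=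
        W_le_W_pow_div_factorial (by norm_num) hα hα1 hp (Nat.lt_floor_add_one p).le ht ht1
      _ ≤ √(2 * π * ⌊p⌋₊ / exp 1) :=
        W_pow_div_factorial_le_sqrt (Nat.one_le_floor_iff p |>.2 hp)
          (Nat.lt_succ_iff.1 ((Nat.floor_lt (by linarith)).2 (by exact_mod_cast hp4)))
      _ ≤ √(2 * π * p / exp 1) := by
        gcongr
        exact Nat.floor_le (by linarith)

lemma W_le_sqrt_of_one_le (hp : 1 ≤ p) (hα : 0 < α) (hα1 : α ≤ 1) (ht1 : 1 ≤ t)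
    (ht : t ≤ p ^ p) : W t α ≤ √(2 * π * p / exp 1) := by
  have W_le := W_le_one_add_mul_sq (zero_lt_one.trans_le ht1) hα
  have nonneg : 0 ≤ (t - 1) / (t + α) := div_nonneg (by linarith) (by linarith)
  rcases le_total p 2 with hp2 | hp2
  · have t_le : t ≤ 4 :=
      calc t ≤ p ^ p := ht
        _ ≤ 2 ^ p := by gcongr
        _ ≤ 2 ^ (2 : ℝ) := by gcongr; norm_num
        _ = 4 := by norm_num
    have le_at_four : (t - 1) / (t + α) ≤ 3 / (4 + α) := by
      rw [div_le_div_iff₀ (by positivity) (by positivity)]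
      nlinarith
    calc W t α ≤ 1 + α * (3 / (4 + α)) ^ 2 := by
          grw [W_le, pow_le_pow_left₀ nonneg le_at_four]
      _ ≤ 1 + 9 / 25 := by
        rw [div_pow, ← mul_div_assoc, add_le_add_iff_left,
          div_le_div_iff₀ (by positivity) (by positivity)]
        nlinarith
      _ ≤ √(2 * π * p / exp 1) :=
        le_sqrt_two_pi_mul_div_exp_one (by linarith) (by norm_num; linarith)
  · have le_one : (t - 1) / (t + α) ≤ 1 := (div_le_one (by positivity)).2 (by linarith)
    calc W t α ≤ 1 + 1 * 1 ^ 2 := by grw [W_le, pow_le_pow_left₀ nonneg le_one, hα1]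
      _ ≤ √(2 * π * p / exp 1) :=
        le_sqrt_two_pi_mul_div_exp_one (by linarith) (by norm_num; linarith)

lemma rpow_div_Gamma_le_rpow (hp : 1 ≤ p) (hα : 0 ≤ α) : α ^ p / Gamma (p + 1) ≤ α ^ p :=
  div_le_self (by positivity) (one_le_Gamma_add_one hp)

lemma rpow_div_Gamma_mem_Icc (hp : 1 ≤ p) (hα : 0 ≤ α) (hαp : α ≤ p) :
    α ^ p / Gamma (p + 1) ∈ Icc (α ^ p / Gamma (p + 1)) (p ^ p) :=
  left_mem_Icc.2 ((rpow_div_Gamma_le_rpow hp hα).trans (by gcongr))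

lemma rpow_mul_rpow_mem_Icc (hp : 1 ≤ p) (hα : 0 ≤ α) (hα1 : α ≤ 1) :
    α ^ p * p ^ p ∈ Icc (α ^ p / Gamma (p + 1)) (p ^ p) := by
  have hp0 : 0 ≤ p := by linarith
  constructor
  · calc α ^ p / Gamma (p + 1) ≤ α ^ p := rpow_div_Gamma_le_rpow hp hα
      _ ≤ α ^ p * p ^ p := le_mul_of_one_le_right (by positivity) (one_le_rpow hp hp0)
  · exact mul_le_of_le_one_left (by positivity) (rpow_le_one hα hα1 hp0)

theorem W_le_sqrt_general (hp : 1 ≤ p) (hα : α ∈ Icc (1 / (exp 1 - 1)) 1)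
    (ht : t ∈ Icc (α ^ p / Gamma (p + 1)) (p ^ p)) : W t α ≤ √(2 * π * p / exp 1) := by
  have α_ge : 32 / 55 ≤ α := le_one_div_exp_one_sub_one.trans hα.1
  rcases le_total t 1 with ht1 | ht1
  · exact W_le_sqrt_of_le_one hp α_ge hα.2 ht.1 ht1
  · exact W_le_sqrt_of_one_le hp (by linarith) hα.2 ht1 ht.2

end

/-- Suppose `p ≥ 1`, `α ∈ [1/(e-1), 1]`, and `t = α^p/Γ(p+1)`, or `t = α^p p^p`
together with `α^p p^p ≥ 1`. Then
`W(t, α) = (t^{t/(t+α)}/(t+α)) (α+1) ≤ √(2πp/e)`. -/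
theorem W_le_sqrt (p α t : ℝ) (hp : 1 ≤ p)
    (hα : α ∈ Set.Icc (1 / (Real.exp 1 - 1)) 1)
    (ht : t = α ^ p / Real.Gamma (p + 1) ∨
      (t = α ^ p * p ^ p ∧ 1 ≤ α ^ p * p ^ p)) :
    t ^ (t / (t + α)) / (t + α) * (α + 1) ≤ Real.sqrt (2 * Real.pi * p / Real.exp 1) := by
  have α_nonneg : 0 ≤ α := by linarith [le_one_div_exp_one_sub_one, hα.1]
  rcases ht with rfl | ⟨rfl, -⟩
  · exact W_le_sqrt_general hp hα (rpow_div_Gamma_mem_Icc hp α_nonneg (hα.2.trans hp))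
  · exact W_le_sqrt_general hp hα (rpow_mul_rpow_mem_Icc hp α_nonneg hα.2)
end

section
/- For every p ≥ 2, the point α = 1/(e−1) maximizes the function α ↦ (1 + (α^{p−1}/Γ(p+1))²)/(1 + α^{p−1}/Γ(p+1)) over the interval [1/(e−1), 1]; that is, for all α ∈ [1/(e−1), 1], (1 + (α^{p−1}/Γ(p+1))²)/(1 + α^{p−1}/Γ(p+1)) ≤ (1 + ((e−1)^{1−p}/Γ(p+1))²)/(1 + (e−1)^{1−p}/Γ(p+1)). -/
/-!
With `u = 1 + x` one has `(1 + x²) / (1 + x) = u + 2 / u - 2`, which is invariant under `u ↦ 2 / u`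
and decreasing on `(0, √2]`. Hence for `y ≤ x` the value at `y` is at least the value at `x` as soon
as `(1 + x) (1 + y) ≤ 2`. Here `x = α ^ (p - 1) / Γ(p + 1) ≤ 1 / 2` because `Γ(p + 1) ≥ p ≥ 2`,
while a left endpoint `β ≤ 2 / 3` gives `y = β ^ (p - 1) / Γ(p + 1) ≤ 1 / 3`, and
`(1 + 1 / 2) (1 + 1 / 3) = 2`.
-/

theorem one_add_sq_div_one_add_le_of_mul_le_two {K : Type*} [Field K] [LinearOrder K]
    [IsStrictOrderedRing K] {x y : K} (hy : -1 < y) (hyx : y ≤ x) (hxy : (1 + x) * (1 + y) ≤ 2) :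
    (1 + x ^ 2) / (1 + x) ≤ (1 + y ^ 2) / (1 + y) := by
  have hy' : 0 < 1 + y := by linarith
  have hx' : 0 < 1 + x := by linarith
  have cross_diff : (1 + y ^ 2) * (1 + x) - (1 + x ^ 2) * (1 + y) =
      (x - y) * (2 - (1 + x) * (1 + y)) := by ring
  rw [div_le_div_iff₀ hx' hy', ← sub_nonneg, cross_diff]
  exact mul_nonneg (sub_nonneg.2 hyx) (sub_nonneg.2 hxy)

theorem self_le_Gamma_add_one {p : ℝ} (hp : 2 ≤ p) : p ≤ Real.Gamma (p + 1) := by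
  have one_le_Gamma : 1 ≤ Real.Gamma p :=
    Real.Gamma_two ▸ Real.Gamma_strictMonoOn_Ici.monotoneOn Set.self_mem_Ici hp hp
  rw [Real.Gamma_add_one (by positivity)]
  exact le_mul_of_one_le_right (by positivity) one_le_Gamma

theorem rpow_sub_one_div_Gamma_le_div_two {p a : ℝ} (hp : 2 ≤ p) (ha₀ : 0 ≤ a) (ha₁ : a ≤ 1) :
    a ^ (p - 1) / Real.Gamma (p + 1) ≤ a / 2 := by
  have rpow_le : a ^ (p - 1) ≤ a := Real.rpow_le_self_of_le_one ha₀ ha₁ (by linarith)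
  have two_le_Gamma : 2 ≤ Real.Gamma (p + 1) := hp.trans (self_le_Gamma_add_one hp)
  exact div_le_div₀ ha₀ rpow_le two_pos two_le_Gamma

theorem argmax_left_endpoint_general {p α β : ℝ} (hp : 2 ≤ p) (hβ : β ∈ Set.Icc 0 (2 / 3))
    (hα : α ∈ Set.Icc β 1) :
    (1 + (α ^ (p - 1) / Real.Gamma (p + 1)) ^ 2) / (1 + α ^ (p - 1) / Real.Gamma (p + 1)) ≤
      (1 + (β ^ (p - 1) / Real.Gamma (p + 1)) ^ 2) / (1 + β ^ (p - 1) / Real.Gamma (p + 1)) := by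
  obtain ⟨hβ₀, hβ₁⟩ := hβ
  obtain ⟨hβα, hα₁⟩ := hα
  have hα₀ : 0 ≤ α := hβ₀.trans hβα
  have hΓ : 0 < Real.Gamma (p + 1) := Real.Gamma_pos_of_pos (by linarith)
  have hx : α ^ (p - 1) / Real.Gamma (p + 1) ≤ 1 / 2 := by
    linarith [rpow_sub_one_div_Gamma_le_div_two hp hα₀ hα₁]
  have hy : β ^ (p - 1) / Real.Gamma (p + 1) ≤ 1 / 3 := by
    linarith [rpow_sub_one_div_Gamma_le_div_two hp hβ₀ (hβα.trans hα₁)]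
  have hy₀ : 0 ≤ β ^ (p - 1) / Real.Gamma (p + 1) :=
    div_nonneg (Real.rpow_nonneg hβ₀ _) hΓ.le
  have hyx : β ^ (p - 1) / Real.Gamma (p + 1) ≤ α ^ (p - 1) / Real.Gamma (p + 1) :=
    div_le_div_of_nonneg_right (Real.rpow_le_rpow hβ₀ hβα (by linarith)) hΓ.le
  refine one_add_sq_div_one_add_le_of_mul_le_two (by linarith) hyx ?_
  calc (1 + α ^ (p - 1) / Real.Gamma (p + 1)) * (1 + β ^ (p - 1) / Real.Gamma (p + 1))
      ≤ (1 + 1 / 2) * (1 + 1 / 3) := by gcongr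
    _ = 2 := by norm_num

theorem one_div_exp_one_sub_one_mem_Icc :
    1 / (Real.exp 1 - 1) ∈ Set.Icc (0 : ℝ) (2 / 3) := by
  have three_halves_le : 3 / 2 ≤ Real.exp 1 - 1 := by linarith [Real.exp_one_gt_d9]
  refine ⟨one_div_nonneg.2 (by linarith), ?_⟩
  exact (one_div_le_one_div_of_le (by norm_num) three_halves_le).trans_eq (by norm_num)

/-- For every `p ≥ 2`, the point `α = 1/(e-1)` maximizes
`α ↦ (1 + (α^{p-1}/Γ(p+1))²)/(1 + α^{p-1}/Γ(p+1))` over `[1/(e-1), 1]`. -/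
theorem argmax_left_endpoint (p α : ℝ) (hp : 2 ≤ p)
    (hα : α ∈ Set.Icc (1 / (Real.exp 1 - 1)) 1) :
    (1 + (α ^ (p - 1) / Real.Gamma (p + 1)) ^ (2 : ℕ)) /
        (1 + α ^ (p - 1) / Real.Gamma (p + 1)) ≤
      (1 + ((Real.exp 1 - 1) ^ (1 - p) / Real.Gamma (p + 1)) ^ (2 : ℕ)) /
        (1 + (Real.exp 1 - 1) ^ (1 - p) / Real.Gamma (p + 1)) := by
  rw [← neg_sub p 1, Real.rpow_neg_eq_inv_rpow, ← one_div]
  exact argmax_left_endpoint_general hp one_div_exp_one_sub_one_mem_Icc hα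
end

section
/- Let X have the exponential distribution with parameter 1. If p/q ≥ 2, q ≥ 2 and t ≥ 0, then ‖X − t‖_p ≤ C₀·(p/q)·‖X − t‖_q, where C₀ = e^{W(1/e)}. -/
/-!
Write `N = ‖X - t‖_q` and `w = W(1/e)`. By the memoryless property the part of `E|X - t|^s` beyond
`t` is exactly `e^{-t} Γ(s + 1)`, and the part before `t` is at most `t^s`.

Taking `s = q`, we get `log Γ(q + 1) ≤ t + q log N`, while `1 + (t - 1)^2 = ‖X - t‖_2^2 ≤ N^2` gives
`t ≤ 1 + N`. For `N = c q`, Stirling's formula turns these into `-1 ≤ c + log c` to leading order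
as `q → ∞`, and `-1 = w + log w`: this is where the constant comes from. The lower order terms
leave enough room for `N ≥ w (q + 1/7)`.

Taking `s = p`, the logarithm of Stirling's `Γ(s + 1) / (√s (s / e)^s)` is decreasing, so it cancels
when `Γ(p + 1)` is compared with `Γ(q + 1) ≤ e^t N^q`. With the lower bound on `N` this gives
`e^{-t} Γ(p + 1) ≤ (8/9) (e^w (p/q) N)^p`. Finally `t^2 ≤ 2 N^2` bounds `t^p` by the remaining
ninth, because `p ≥ 4`.
-/

open MeasureTheory

/-- `‖X - t‖ₛ` for `X` exponential with parameter 1: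
`(∫_0^∞ e^{-x} |x - t|^s dx)^{1/s}`. -/
noncomputable def expShiftNorm (s t : ℝ) : ℝ :=
  (∫ x in Set.Ioi (0 : ℝ), Real.exp (-x) * |x - t| ^ s) ^ (1 / s)

open Real Set Filter Topology ProbabilityTheory
open scoped Nat

section Stirling

variable {s : ℝ}

/-- The logarithm of the ratio of `Γ(s + 1)` to `√s (s / e)^s`, that is, of `√(2π)` times the
relative error in Stirling's formula. -/
noncomputable def stirlingRemainder (s : ℝ) : ℝ :=
  log (Gamma (s + 1)) - (s + 1 / 2) * log s + s

lemma log_Gamma_add_one (hs : 0 < s) : log (Gamma (s + 1)) = log (Gamma s) + log s := by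
  rw [Gamma_add_one hs.ne', log_mul hs.ne' (Gamma_pos_of_pos hs).ne', add_comm]

lemma stirlingRemainder_sub_stirlingRemainder_add_one (hs : 0 < s) :
    stirlingRemainder s - stirlingRemainder (s + 1) = (s + 1 / 2) * log (1 + s⁻¹) - 1 := by
  have hlog : log (1 + s⁻¹) = log (s + 1) - log s := by
    rw [← log_div (by positivity) hs.ne']
    congr 1
    field_simp
  rw [stirlingRemainder, stirlingRemainder, log_Gamma_add_one (by positivity : 0 < s + 1), hlog]
  ring

lemma hasSum_add_half_mul_log_one_add_inv (hs : 0 < s) :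
    HasSum (fun k : ℕ ↦ 1 / (2 * k + 1) * (1 / (2 * s + 1)) ^ (2 * k))
      ((s + 1 / 2) * log (1 + s⁻¹)) := by
  convert! (hasSum_log_one_add_inv hs).mul_left (s + 1 / 2) using 2 with k
  rw [pow_succ]
  field_simp

lemma antitoneOn_add_half_mul_log_one_add_inv :
    AntitoneOn (fun s : ℝ ↦ (s + 1 / 2) * log (1 + s⁻¹)) (Ioi 0) := by
  intro q (hq : 0 < q) p (hp : 0 < p) hqp
  refine hasSum_le (fun k ↦ ?_) (hasSum_add_half_mul_log_one_add_inv hp)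
    (hasSum_add_half_mul_log_one_add_inv hq)
  gcongr

lemma tendsto_stirlingRemainder_natCast :
    Tendsto (fun n : ℕ ↦ stirlingRemainder n) atTop (𝓝 (log (2 * π) / 2)) := by
  have hlim : log √π + log 2 / 2 = log (2 * π) / 2 := by
    rw [log_sqrt pi_nonneg, log_mul two_ne_zero pi_ne_zero]
    ring
  rw [← hlim]
  refine ((Stirling.tendsto_stirlingSeq_sqrt_pi.log (by positivity)).add_const (log 2 / 2)).congr'
    ?_
  filter_upwards [eventually_ne_atTop 0] with n hn
  have hn' : (n : ℝ) ≠ 0 := Nat.cast_ne_zero.2 hn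
  rw [Stirling.log_stirlingSeq_formula, stirlingRemainder, Gamma_nat_eq_factorial,
    log_mul two_ne_zero hn', log_div hn' (exp_pos 1).ne', log_exp]
  ring

lemma stirlingRemainder_add_natCast (hs : 0 < s) {n : ℕ} (hn : n ≠ 0) :
    stirlingRemainder (s + n) = log (Gamma s) - BohrMollerup.logGammaSeq s n
      + stirlingRemainder n + s - (n * log (1 + s / n) + (s + 1 / 2) * log (1 + s / n)) := by
  have hn' : (n : ℝ) ≠ 0 := Nat.cast_ne_zero.2 hn
  have hΓ : log (Gamma (s + n + 1)) =
      log (Gamma s) + ∑ m ∈ Finset.range (n + 1), log (s + m) := by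
    simpa [add_assoc] using
      BohrMollerup.f_add_nat_eq (f := fun x ↦ log (Gamma x)) log_Gamma_add_one hs (n + 1)
  have hlog : log (s + n) = log n + log (1 + s / n) := by
    rw [← log_mul hn' (by positivity)]
    congr 1
    field_simp
    ring
  rw [stirlingRemainder, stirlingRemainder, hΓ, hlog, Gamma_nat_eq_factorial,
    BohrMollerup.logGammaSeq]
  ring

theorem tendsto_stirlingRemainder_add_natCast (hs : 0 < s) :
    Tendsto (fun n : ℕ ↦ stirlingRemainder (s + n)) atTop (𝓝 (log (2 * π) / 2)) := by
  have hmul : Tendsto (fun n : ℕ ↦ n * log (1 + s / n)) atTop (𝓝 s) :=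
    (tendsto_mul_log_one_add_div_atTop s).comp tendsto_natCast_atTop_atTop
  have hlog : Tendsto (fun n : ℕ ↦ log (1 + s / n)) atTop (𝓝 0) := by
    simpa using ((tendsto_const_div_atTop_nhds_zero_nat s).const_add 1).log (by norm_num)
  have h := ((((BohrMollerup.tendsto_log_gamma hs).const_sub (log (Gamma s))).add
    tendsto_stirlingRemainder_natCast).add_const s).sub (hmul.add (hlog.const_mul (s + 1 / 2)))
  rw [show log (Gamma s) - log (Gamma s) + log (2 * π) / 2 + s - (s + (s + 1 / 2) * 0) =
    log (2 * π) / 2 by ring] at h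
  refine h.congr' ?_
  filter_upwards [eventually_ne_atTop 0] with n hn
  exact (stirlingRemainder_add_natCast hs hn).symm

theorem antitoneOn_stirlingRemainder : AntitoneOn stirlingRemainder (Ioi 0) := by
  intro q (hq : 0 < q) p (hp : 0 < p) hqp
  have hmono : Monotone fun n : ℕ ↦ stirlingRemainder (p + n) - stirlingRemainder (q + n) := by
    refine monotone_nat_of_le_succ fun n ↦ ?_
    have hqn : 0 < q + n := by positivity
    have hpn : 0 < p + n := by positivity
    have hstep := antitoneOn_add_half_mul_log_one_add_inv hqn hpn (by gcongr)
    simp only at hstep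
    push_cast
    rw [← add_assoc, ← add_assoc]
    linarith [stirlingRemainder_sub_stirlingRemainder_add_one hqn,
      stirlingRemainder_sub_stirlingRemainder_add_one hpn]
  have hlim := (tendsto_stirlingRemainder_add_natCast hp).sub
    (tendsto_stirlingRemainder_add_natCast hq)
  rw [sub_self] at hlim
  simpa using hmono.ge_of_tendsto hlim 0

theorem log_two_pi_div_two_le_stirlingRemainder (hs : 0 < s) :
    log (2 * π) / 2 ≤ stirlingRemainder s :=
  le_of_tendsto' (tendsto_stirlingRemainder_add_natCast hs) fun n ↦
    antitoneOn_stirlingRemainder hs (by positivity : 0 < s + n) (by simp)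

lemma log_Gamma_add_one_sub_le {p q : ℝ} (hq : 0 < q) (hqp : q ≤ p) :
    log (Gamma (p + 1)) - log (Gamma (q + 1)) ≤
      log (p / q) / 2 + p * log p - q * log q - (p - q) := by
  have h := antitoneOn_stirlingRemainder hq (hq.trans_le hqp) hqp
  rw [stirlingRemainder, stirlingRemainder] at h
  rw [log_div (hq.trans_le hqp).ne' hq.ne']
  linarith

end Stirling

lemma five_halves_mul_log_two_le_log_two_pi : 5 / 2 * log 2 ≤ log (2 * π) := by
  have h : log ((2 : ℝ) ^ 5) ≤ log ((2 * π) ^ 2) :=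
    log_le_log (by norm_num) (by nlinarith [pi_gt_three])
  rw [log_pow, log_pow] at h
  push_cast at h
  linarith

lemma log_le_div_four_add {x : ℝ} (hx : 0 < x) : log x ≤ x / 4 + 2 * log 2 - 1 := by
  have h := log_le_sub_one_of_pos (by positivity : 0 < x / 4)
  rw [log_div hx.ne' (by norm_num), show (4 : ℝ) = 2 ^ 2 by norm_num, log_pow] at h
  push_cast at h
  linarith

lemma rpow_le_rpow_half_mul_rpow {a b c p : ℝ} (ha : 0 ≤ a) (hb : 0 ≤ b) (hc : 0 ≤ c)
    (hp : 0 ≤ p) (hab : a ^ 2 ≤ c * b ^ 2) : a ^ p ≤ c ^ (p / 2) * b ^ p := by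
  have hsq : ∀ x : ℝ, 0 ≤ x → x ^ p = (x ^ 2) ^ (p / 2) := fun x hx ↦ by
    rw [← rpow_two, ← rpow_mul hx, mul_div_cancel₀ p two_ne_zero]
  calc a ^ p = (a ^ 2) ^ (p / 2) := hsq a ha
    _ ≤ (c * b ^ 2) ^ (p / 2) := by gcongr
    _ = c ^ (p / 2) * b ^ p := by rw [mul_rpow hc (by positivity), hsq b hb]

section Exponential

lemma expMeasure_eq_withDensity (r : ℝ) : expMeasure r =
    (volume.restrict (Ioi 0)).withDensity fun x ↦ ENNReal.ofReal (r * exp (-(r * x))) := by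
  rw [restrict_Ioi_eq_restrict_Ici, ← withDensity_indicator measurableSet_Ici]
  change volume.withDensity (exponentialPDF r) = _
  congr 1 with x
  by_cases hx : 0 ≤ x <;> simp [exponentialPDF_eq, hx]

variable {E : Type*} [NormedAddCommGroup E] [NormedSpace ℝ E] {r : ℝ}

lemma integrable_expMeasure_iff (hr : 0 ≤ r) {f : ℝ → E} :
    Integrable f (expMeasure r) ↔ IntegrableOn (fun x ↦ (r * exp (-(r * x))) • f x) (Ioi 0) := by
  rw [expMeasure_eq_withDensity, integrable_withDensity_iff_integrable_smul' (by fun_prop)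
    (ae_of_all _ fun _ ↦ ENNReal.ofReal_lt_top), IntegrableOn]
  congr! with x
  exact ENNReal.toReal_ofReal (by positivity)

lemma integral_expMeasure (hr : 0 ≤ r) (f : ℝ → E) :
    ∫ x, f x ∂expMeasure r = ∫ x in Ioi 0, (r * exp (-(r * x))) • f x := by
  rw [expMeasure_eq_withDensity, integral_withDensity_eq_integral_toReal_smul (by fun_prop)
    (ae_of_all _ fun _ ↦ ENNReal.ofReal_lt_top)]
  congr with x
  rw [ENNReal.toReal_ofReal (by positivity)]

end Exponential

lemma integral_rpow_rpow_one_div_le {α : Type*} [MeasurableSpace α] {μ : Measure α}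
    [IsProbabilityMeasure μ] {f : α → ℝ} (hf : 0 ≤ᵐ[μ] f) {r s : ℝ} (hr : 0 < r) (hrs : r ≤ s)
    (hfr : Integrable (fun x ↦ f x ^ r) μ) (hfs : Integrable (fun x ↦ f x ^ s) μ) :
    (∫ x, f x ^ r ∂μ) ^ (1 / r) ≤ (∫ x, f x ^ s ∂μ) ^ (1 / s) := by
  have hs : 0 < s := hr.trans_le hrs
  have hpow : ∀ᵐ x ∂μ, (f x ^ r) ^ (s / r) = f x ^ s := by
    filter_upwards [hf] with x hx
    rw [← rpow_mul hx, mul_div_cancel₀ s hr.ne']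
  have hnonneg : ∀ᵐ x ∂μ, f x ^ r ∈ Ici 0 := hf.mono fun x hx ↦ rpow_nonneg hx r
  have hint : 0 ≤ ∫ x, f x ^ r ∂μ := integral_nonneg_of_ae hnonneg
  have jensen : (∫ x, f x ^ r ∂μ) ^ (s / r) ≤ ∫ x, f x ^ s ∂μ := by
    rw [← integral_congr_ae hpow]
    exact (convexOn_rpow ((one_le_div hr).2 hrs)).map_integral_le
      (continuous_rpow_const (by positivity)).continuousOn isClosed_Ici hnonneg hfr
      (hfs.congr (hpow.mono fun x hx ↦ hx.symm))
  calc (∫ x, f x ^ r ∂μ) ^ (1 / r) = ((∫ x, f x ^ r ∂μ) ^ (s / r)) ^ (1 / s) := by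
        rw [← rpow_mul hint]
        congr 1
        field_simp
    _ ≤ _ := by gcongr

/-- The moment `E|X - t|^s` of an exponential variable `X` with parameter 1, i.e. `‖X - t‖ₛ^s`. -/
noncomputable def expShiftMoment (s t : ℝ) : ℝ :=
  ∫ x in Ioi 0, exp (-x) * |x - t| ^ s

section Moments

variable {s t : ℝ}

lemma expShiftMoment_nonneg : 0 ≤ expShiftMoment s t :=
  setIntegral_nonneg measurableSet_Ioi fun _ _ ↦ by positivity

lemma expShiftNorm_nonneg : 0 ≤ expShiftNorm s t :=
  rpow_nonneg expShiftMoment_nonneg _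

lemma expShiftNorm_rpow (hs : s ≠ 0) : expShiftNorm s t ^ s = expShiftMoment s t := by
  change (expShiftMoment s t ^ (1 / s)) ^ s = _
  rw [← rpow_mul expShiftMoment_nonneg, one_div_mul_cancel hs, rpow_one]

lemma eqOn_exp_neg_mul_abs_sub_rpow_comp_add :
    EqOn ((fun x ↦ exp (-x) * |x - t| ^ s) ∘ (· + t))
      (fun x ↦ exp (-t) * (exp (-x) * x ^ (s + 1 - 1))) (Ioi 0) := by
  intro x (hx : 0 < x)
  simp only [Function.comp_apply, add_sub_cancel_right, abs_of_pos hx, neg_add, exp_add]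
  ring

lemma integrableOn_Ioi_self_exp_neg_mul_abs_sub_rpow (hs : -1 < s) :
    IntegrableOn (fun x ↦ exp (-x) * |x - t| ^ s) (Ioi t) := by
  rw [← (measurePreserving_add_right volume t).integrableOn_comp_preimage
    (measurableEmbedding_addRight t), preimage_add_const_Ioi, sub_self,
    integrableOn_congr_fun eqOn_exp_neg_mul_abs_sub_rpow_comp_add measurableSet_Ioi]
  exact (GammaIntegral_convergent (by linarith)).const_mul _

lemma integral_Ioi_self_exp_neg_mul_abs_sub_rpow (hs : -1 < s) :
    ∫ x in Ioi t, exp (-x) * |x - t| ^ s = exp (-t) * Gamma (s + 1) := by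
  rw [← (measurePreserving_add_right volume t).setIntegral_preimage_emb
    (measurableEmbedding_addRight t), preimage_add_const_Ioi, sub_self,
    Gamma_eq_integral (by linarith), ← integral_const_mul]
  exact setIntegral_congr_fun measurableSet_Ioi eqOn_exp_neg_mul_abs_sub_rpow_comp_add

lemma integrableOn_Ioc_exp_neg_mul_abs_sub_rpow (hs : 0 ≤ s) (a b : ℝ) :
    IntegrableOn (fun x ↦ exp (-x) * |x - t| ^ s) (Ioc a b) :=
  Continuous.integrableOn_Ioc <| by fun_prop (disch := exact fun _ ↦ Or.inr hs)

lemma integrableOn_Ioi_exp_neg_mul_abs_sub_rpow (hs : 0 ≤ s) (a : ℝ) :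
    IntegrableOn (fun x ↦ exp (-x) * |x - t| ^ s) (Ioi a) :=
  ((integrableOn_Ioc_exp_neg_mul_abs_sub_rpow hs a t).union
    (integrableOn_Ioi_self_exp_neg_mul_abs_sub_rpow (by linarith))).mono_set
    Ioi_subset_Ioc_union_Ioi

lemma expShiftMoment_eq_add (hs : 0 ≤ s) (ht : 0 ≤ t) :
    expShiftMoment s t =
      (∫ x in Ioc 0 t, exp (-x) * |x - t| ^ s) + exp (-t) * Gamma (s + 1) := by
  rw [expShiftMoment, ← Ioc_union_Ioi_eq_Ioi ht, setIntegral_union (Ioc_disjoint_Ioi le_rfl)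
    measurableSet_Ioi (integrableOn_Ioc_exp_neg_mul_abs_sub_rpow hs 0 t)
    (integrableOn_Ioi_exp_neg_mul_abs_sub_rpow hs t),
    integral_Ioi_self_exp_neg_mul_abs_sub_rpow (by linarith)]

lemma exp_neg_mul_Gamma_le_expShiftMoment (hs : 0 ≤ s) (ht : 0 ≤ t) :
    exp (-t) * Gamma (s + 1) ≤ expShiftMoment s t := by
  rw [expShiftMoment_eq_add hs ht]
  exact le_add_of_nonneg_left (setIntegral_nonneg measurableSet_Ioc fun _ _ ↦ by positivity)

lemma expShiftMoment_le (hs : 0 ≤ s) (ht : 0 ≤ t) :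
    expShiftMoment s t ≤ t ^ s + exp (-t) * Gamma (s + 1) := by
  rw [expShiftMoment_eq_add hs ht]
  gcongr
  calc ∫ x in Ioc 0 t, exp (-x) * |x - t| ^ s
      ≤ ∫ x in Ioc 0 t, exp (-x) * t ^ s := by
        refine setIntegral_mono_on (integrableOn_Ioc_exp_neg_mul_abs_sub_rpow hs 0 t)
          (Continuous.integrableOn_Ioc (by fun_prop)) measurableSet_Ioc fun x hx ↦ ?_
        have habs : |x - t| ≤ t := abs_le.2 ⟨by linarith [hx.1], by linarith [hx.2]⟩
        gcongr
    _ ≤ ∫ x in Ioi 0, exp (-x) * t ^ s :=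
        setIntegral_mono_set ((integrableOn_exp_neg_Ioi 0).mul_const _)
          (ae_of_all _ fun _ ↦ by positivity) Ioc_subset_Ioi_self.eventuallyLE
    _ = t ^ s := by rw [integral_mul_const, integral_exp_neg_Ioi_zero, one_mul]

lemma expShiftNorm_pos (hs : 0 ≤ s) (ht : 0 ≤ t) : 0 < expShiftNorm s t := by
  have hΓ : 0 < Gamma (s + 1) := Gamma_pos_of_pos (by linarith)
  exact rpow_pos_of_pos
    ((mul_pos (exp_pos _) hΓ).trans_le (exp_neg_mul_Gamma_le_expShiftMoment hs ht)) _

theorem expShiftNorm_mono {r : ℝ} (hr : 0 < r) (hrs : r ≤ s) :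
    expShiftNorm r t ≤ expShiftNorm s t := by
  have := isProbabilityMeasure_expMeasure one_pos
  have hint : ∀ u : ℝ, 0 ≤ u → Integrable (fun x ↦ |x - t| ^ u) (expMeasure 1) := fun u hu ↦ by
    simpa [integrable_expMeasure_iff] using integrableOn_Ioi_exp_neg_mul_abs_sub_rpow hu 0
  simpa [integral_expMeasure, expShiftNorm] using
    integral_rpow_rpow_one_div_le (μ := expMeasure 1) (f := fun x ↦ |x - t|)
      (ae_of_all _ fun x ↦ abs_nonneg (x - t)) hr hrs (hint r hr.le)
      (hint s (hr.le.trans hrs))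

lemma integrableOn_exp_neg_mul_pow (k : ℕ) :
    IntegrableOn (fun x ↦ exp (-x) * x ^ k) (Ioi 0) := by
  simpa using GammaIntegral_convergent (s := k + 1) (by positivity)

lemma integral_exp_neg_mul_pow (k : ℕ) : ∫ x in Ioi 0, exp (-x) * x ^ k = k ! := by
  simpa [Gamma_nat_eq_factorial] using (Gamma_eq_integral (s := k + 1) (by positivity)).symm

lemma expShiftMoment_two : expShiftMoment 2 t = 1 + (t - 1) ^ 2 := by
  have h0 := (integrableOn_exp_neg_mul_pow 0).const_mul (t ^ 2)
  have h1 := (integrableOn_exp_neg_mul_pow 1).const_mul (2 * t)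
  have h2 := integrableOn_exp_neg_mul_pow 2
  calc expShiftMoment 2 t
      = ∫ x in Ioi 0, (exp (-x) * x ^ 2 - 2 * t * (exp (-x) * x ^ 1)
          + t ^ 2 * (exp (-x) * x ^ 0)) := by
        simp only [expShiftMoment, rpow_two, sq_abs]
        congr with x
        ring
    _ = (2 ! : ℝ) - 2 * t * 1 ! + t ^ 2 * 0 ! := by
        rw [integral_add (h2.fun_sub h1) h0, integral_sub h2 h1]
        simp only [integral_const_mul, integral_exp_neg_mul_pow]
    _ = 1 + (t - 1) ^ 2 := by
        norm_num [Nat.factorial]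
        ring

lemma one_add_sub_one_sq_le_expShiftNorm_sq (hs : 2 ≤ s) :
    1 + (t - 1) ^ 2 ≤ expShiftNorm s t ^ 2 := by
  rw [← expShiftMoment_two, ← expShiftNorm_rpow two_ne_zero, rpow_two]
  exact pow_le_pow_left₀ expShiftNorm_nonneg (expShiftNorm_mono two_pos hs) 2

lemma le_one_add_expShiftNorm (hs : 2 ≤ s) : t ≤ 1 + expShiftNorm s t := by
  have h : t - 1 ≤ expShiftNorm s t := le_of_sq_le_sq
    (by linarith [one_add_sub_one_sq_le_expShiftNorm_sq (t := t) hs]) expShiftNorm_nonneg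
  linarith

lemma sq_le_two_mul_expShiftNorm_sq (hs : 2 ≤ s) : t ^ 2 ≤ 2 * expShiftNorm s t ^ 2 := by
  nlinarith [one_add_sub_one_sq_le_expShiftNorm_sq (t := t) hs, sq_nonneg (t - 2)]

lemma log_Gamma_add_one_le (hs : 0 < s) (ht : 0 ≤ t) :
    log (Gamma (s + 1)) ≤ t + s * log (expShiftNorm s t) := by
  have hΓ : 0 < Gamma (s + 1) := Gamma_pos_of_pos (by linarith)
  have h := exp_neg_mul_Gamma_le_expShiftMoment hs.le ht
  rw [← expShiftNorm_rpow hs.ne'] at h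
  have hlog := log_le_log (by positivity) h
  rw [log_mul (exp_pos _).ne' hΓ.ne', log_exp, log_rpow (expShiftNorm_pos hs.le ht)] at hlog
  linarith

end Moments

section Lambert

variable {a w : ℝ}

lemma log_eq_sub_of_mul_exp_eq_exp (hw : 0 < w) (h : w * exp w = exp a) : log w = a - w := by
  rw [← log_exp a, ← h, log_mul hw.ne' (exp_pos w).ne', log_exp]
  ring

lemma one_fourth_le_of_mul_exp_eq (hw : 0 < w) (h : w * exp w = exp (-1)) : 1 / 4 ≤ w := by
  by_contra! hlt
  have hlog4 : log (1 / 4) = -2 * log 2 := by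
    rw [show (1 / 4 : ℝ) = 2 ^ (-2 : ℤ) by norm_num, log_zpow]
    norm_num
  have hlog := log_lt_log hw hlt
  rw [log_eq_sub_of_mul_exp_eq_exp hw h, hlog4] at hlog
  linarith [log_two_gt_d9]

lemma le_three_eighths_of_mul_exp_eq (hw : 0 < w) (h : w * exp w = exp (-1)) : w ≤ 3 / 8 :=
  calc w ≤ w * exp w := le_mul_of_one_le_right hw.le (one_le_exp hw.le)
    _ = (exp 1)⁻¹ := by rw [h, exp_neg]
    _ ≤ 3 / 8 := inv_le_of_inv_le₀ (by norm_num) (by linarith [exp_one_gt_d9])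

end Lambert

section LargeRatio

variable {w p q t : ℝ}

theorem mul_add_one_seventh_le_expShiftNorm (hw : 0 < w) (hwe : w * exp w = exp (-1))
    (hq : 2 ≤ q) (ht : 0 ≤ t) : w * (q + 1 / 7) ≤ expShiftNorm q t := by
  have hq₀ : 0 < q := by linarith
  by_contra! hlt
  -- A small norm makes both `t` and `t + q log ‖X - t‖_q` small, while the tail beyond `t`
  -- bounds the latter below by `log Γ(q + 1)`; this contradicts Stirling's formula.
  have hlogN : log (expShiftNorm q t) ≤ -1 - w + (log q + 1 / (7 * q)) := by
    have hlog : log (1 + 1 / (7 * q)) ≤ 1 / (7 * q) := by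
      linarith [log_le_sub_one_of_pos (by positivity : 0 < 1 + 1 / (7 * q))]
    calc log (expShiftNorm q t) ≤ log (w * (q * (1 + 1 / (7 * q)))) := by
          refine log_le_log (expShiftNorm_pos hq₀.le ht) (hlt.le.trans_eq ?_)
          field_simp
      _ = -1 - w + (log q + log (1 + 1 / (7 * q))) := by
          rw [log_mul hw.ne' (by positivity), log_mul hq₀.ne' (by positivity),
            log_eq_sub_of_mul_exp_eq_exp hw hwe]
      _ ≤ _ := by gcongr
  have hmul : q * log (expShiftNorm q t) ≤ q * log q - q - w * q + 1 / 7 := by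
    calc _ ≤ q * (-1 - w + (log q + 1 / (7 * q))) := by gcongr
      _ = _ := by
        field_simp
        ring
  have hrem : stirlingRemainder q + log q / 2 ≤ 1 + (1 + w) / 7 := by
    rw [stirlingRemainder]
    linarith [log_Gamma_add_one_le hq₀ ht, le_one_add_expShiftNorm (t := t) hq]
  linarith [log_two_pi_div_two_le_stirlingRemainder hq₀, five_halves_mul_log_two_le_log_two_pi,
    log_le_log two_pos hq, log_two_gt_d9, le_three_eighths_of_mul_exp_eq hw hwe]

lemma one_eighth_le_mul_log_expShiftNorm (hw : 0 < w) (hwe : w * exp w = exp (-1))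
    (hq : 2 ≤ q) (ht : 0 ≤ t) :
    1 / 8 ≤ q * (log (expShiftNorm q t) - (log q - 1 - w)) := by
  have hq₀ : 0 < q := by linarith
  have hlogq : log q - 1 - w = log (w * q) := by
    rw [log_mul hw.ne' hq₀.ne', log_eq_sub_of_mul_exp_eq_exp hw hwe]
    ring
  have hratio : 1 + 1 / (7 * q) ≤ expShiftNorm q t / (w * q) := by
    rw [le_div_iff₀ (by positivity)]
    refine le_trans (le_of_eq ?_) (mul_add_one_seventh_le_expShiftNorm hw hwe hq ht)
    field_simp
  rw [hlogq, ← log_div (expShiftNorm_pos hq₀.le ht).ne' (by positivity)]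
  calc 1 / 8 ≤ q * (1 - (1 + 1 / (7 * q))⁻¹) := by
        have heq : q * (1 - (1 + 1 / (7 * q))⁻¹) = q / (7 * q + 1) := by
          field_simp
          ring
        rw [heq, div_le_div_iff₀ (by norm_num) (by positivity)]
        linarith
    _ ≤ q * log (1 + 1 / (7 * q)) := by
        gcongr
        exact one_sub_inv_le_log_of_pos (by positivity)
    _ ≤ _ := by gcongr

theorem exp_neg_mul_Gamma_le (hw : 0 < w) (hwe : w * exp w = exp (-1)) (hq : 2 ≤ q)
    (hqp : q ≤ p) (ht : 0 ≤ t) :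
    exp (-t) * Gamma (p + 1) ≤ 8 / 9 * (exp w * (p / q) * expShiftNorm q t) ^ p := by
  have hq₀ : 0 < q := by linarith
  have hp₀ : 0 < p := hq₀.trans_le hqp
  have hN := expShiftNorm_pos hq₀.le ht
  have hΓ : 0 < Gamma (p + 1) := Gamma_pos_of_pos (by linarith)
  have hconst : -(1 / 8) ≤ log (8 / 9) := by
    linarith [one_sub_inv_le_log_of_pos (by norm_num : (0 : ℝ) < 8 / 9)]
  have hgap : (p / q - 1) / 8 ≤ (p - q) * (log (expShiftNorm q t) - (log q - 1 - w)) := by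
    calc (p / q - 1) / 8 = (p / q - 1) * (1 / 8) := by ring
      _ ≤ (p / q - 1) * (q * (log (expShiftNorm q t) - (log q - 1 - w))) := by
          gcongr
          · rwa [sub_nonneg, one_le_div hq₀]
          · exact one_eighth_le_mul_log_expShiftNorm hw hwe hq ht
      _ = _ := by field_simp
  have hqw : 1 / 2 ≤ q * w := by nlinarith [one_fourth_le_of_mul_exp_eq hw hwe]
  have hr := log_le_div_four_add (by positivity : 0 < p / q)
  have hΓp := log_Gamma_add_one_sub_le hq₀ hqp
  have hΓq := log_Gamma_add_one_le hq₀ ht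
  rw [← log_le_log_iff (by positivity) (by positivity), log_mul (exp_pos _).ne' hΓ.ne', log_exp,
    log_mul (by norm_num) (by positivity), log_rpow (by positivity),
    log_mul (by positivity) hN.ne', log_mul (exp_pos w).ne' (by positivity), log_exp]
  have hlogr : log (p / q) = log p - log q := log_div hp₀.ne' hq₀.ne'
  have hplogr : p * log (p / q) = p * log p - p * log q := by rw [hlogr]; ring
  linarith [log_two_lt_d9]

lemma rpow_le_one_ninth_mul_rpow (hw : 1 / 4 ≤ w) (hratio : 2 ≤ p / q) (hq : 2 ≤ q)
    (ht : 0 ≤ t) : t ^ p ≤ 1 / 9 * (exp w * (p / q) * expShiftNorm q t) ^ p := by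
  have hp : 2 * q ≤ p := (le_div_iff₀ (by linarith)).1 hratio
  have hN : 0 ≤ expShiftNorm q t := expShiftNorm_nonneg
  have hexp : 3 / 2 ≤ exp w ^ 2 := by
    rw [← exp_nat_mul]
    push_cast
    linarith [add_one_le_exp (2 * w)]
  have hM : 6 * expShiftNorm q t ^ 2 ≤ (exp w * (p / q) * expShiftNorm q t) ^ 2 :=
    calc 6 * expShiftNorm q t ^ 2 = 3 / 2 * 2 ^ 2 * expShiftNorm q t ^ 2 := by ring
      _ ≤ exp w ^ 2 * (p / q) ^ 2 * expShiftNorm q t ^ 2 := by gcongr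
      _ = _ := by ring
  calc t ^ p ≤ (1 / 3) ^ (p / 2) * (exp w * (p / q) * expShiftNorm q t) ^ p :=
        rpow_le_rpow_half_mul_rpow ht (by positivity) (by norm_num) (by linarith)
          (by linarith [sq_le_two_mul_expShiftNorm_sq (t := t) hq])
    _ ≤ (1 / 3) ^ (2 : ℝ) * (exp w * (p / q) * expShiftNorm q t) ^ p := by
        gcongr ?_ * _
        exact rpow_le_rpow_of_exponent_ge (by norm_num) (by norm_num) (by linarith)
    _ = _ := by norm_num

end LargeRatio

/-- If `p/q ≥ 2`, `q ≥ 2` and `t ≥ 0`, then `‖X - t‖_p ≤ C₀ (p/q) ‖X - t‖_q`,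
where `X` is exponential with parameter 1 and `C₀ = e^{W(1/e)}`. -/
theorem expShiftNorm_le_of_large_ratio
    (w : ℝ) (hw : 0 < w) (hwe : w * Real.exp w = Real.exp (-1))
    (p q t : ℝ) (hratio : 2 ≤ p / q) (hq : 2 ≤ q) (ht : 0 ≤ t) :
    expShiftNorm p t ≤ Real.exp w * (p / q) * expShiftNorm q t := by
  have hqp : 2 * q ≤ p := (le_div_iff₀ (by linarith)).1 hratio
  have hp : 0 < p := by linarith
  have hN : 0 ≤ expShiftNorm q t := expShiftNorm_nonneg
  rw [← rpow_le_rpow_iff expShiftNorm_nonneg (by positivity) hp]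
  calc expShiftNorm p t ^ p = expShiftMoment p t := expShiftNorm_rpow hp.ne'
    _ ≤ t ^ p + exp (-t) * Gamma (p + 1) := expShiftMoment_le hp.le ht
    _ ≤ 1 / 9 * (exp w * (p / q) * expShiftNorm q t) ^ p
          + 8 / 9 * (exp w * (p / q) * expShiftNorm q t) ^ p :=
        add_le_add (rpow_le_one_ninth_mul_rpow (one_fourth_le_of_mul_exp_eq hw hwe) hratio hq ht)
          (exp_neg_mul_Gamma_le hw hwe hq (by linarith) ht)
    _ = (exp w * (p / q) * expShiftNorm q t) ^ p := by ring
end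

section
/- Fix t > 0 and define I(s, t) = ∫_0^t e^{x−t}·x^s dx for s > 0. Then the function s ↦ t^{−s}·I(s, t) is decreasing on (0, ∞). -/
/-!
For `0 < x < t` we have `t ^ (-s) * x ^ s = (x / t) ^ s` with `0 < x / t < 1`, so once the factor
`t ^ (-s)` is moved inside the integral, the integrand is strictly decreasing in `s` at every
interior point. Strict pointwise monotonicity passes to integrals, and all of them converge as
soon as `s > -1`.
-/

open MeasureTheory Set

section Integral

variable {α : Type*} [MeasurableSpace α] {μ : Measure α}

theorem integral_lt_integral_of_ae_lt {f g : α → ℝ} (hμ : μ ≠ 0) (hf : Integrable f μ)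
    (hg : Integrable g μ) (hfg : ∀ᵐ x ∂μ, f x < g x) : ∫ x, f x ∂μ < ∫ x, g x ∂μ := by
  refine (integral_mono_ae hf hg (hfg.mono fun _ => le_of_lt)).lt_of_ne fun heq => hμ ?_
  have hae : f =ᵐ[μ] g :=
    (integral_eq_iff_of_ae_le hf hg (hfg.mono fun _ => le_of_lt)).1 heq
  have hfalse : ∀ᵐ _ ∂μ, False := by
    filter_upwards [hfg, hae] with x hlt hxeq using hlt.ne hxeq
  exact ae_eq_bot.1 (Filter.eventually_false_iff_eq_bot.1 hfalse)

theorem strictAntiOn_integral_of_ae {ι : Type*} [Preorder ι] {S : Set ι} {F : ι → α → ℝ}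
    (hμ : μ ≠ 0) (hint : ∀ s ∈ S, Integrable (F s) μ)
    (hanti : ∀ᵐ x ∂μ, StrictAntiOn (fun s => F s x) S) :
    StrictAntiOn (fun s => ∫ x, F s x ∂μ) S := fun a ha b hb hab =>
  integral_lt_integral_of_ae_lt hμ (hint b hb) (hint a ha) (hanti.mono fun _ h => h ha hb hab)

end Integral

theorem rpow_neg_mul_rpow {t x : ℝ} (ht : 0 ≤ t) (hx : 0 ≤ x) (s : ℝ) :
    t ^ (-s) * x ^ s = (x / t) ^ s := by
  rw [Real.div_rpow hx ht, Real.rpow_neg ht, div_eq_inv_mul]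

theorem strictAnti_rpow_neg_mul_rpow {t x : ℝ} (hx : x ∈ Ioo 0 t) :
    StrictAnti (fun s : ℝ => t ^ (-s) * x ^ s) := by
  have ht : 0 < t := hx.1.trans hx.2
  simp only [rpow_neg_mul_rpow ht.le hx.1.le]
  exact Real.strictAnti_rpow_of_base_lt_one (div_pos hx.1 ht) ((div_lt_one ht).2 hx.2)

theorem strictAntiOn_rpow_neg_mul_integral_mul_rpow {w : ℝ → ℝ} {t : ℝ} {S : Set ℝ} (ht : 0 < t)
    (hw : ∀ x ∈ Ioo 0 t, 0 < w x)
    (hint : ∀ s ∈ S, IntervalIntegrable (fun x => w x * x ^ s) volume 0 t) :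
    StrictAntiOn (fun s : ℝ => t ^ (-s) * ∫ x in (0 : ℝ)..t, w x * x ^ s) S := by
  have hμ : volume.restrict (Ioo 0 t) ≠ 0 := by
    simpa only [ne_eq, Measure.restrict_eq_zero] using (Measure.measure_Ioo_pos volume).2 ht |>.ne'
  simp only [intervalIntegral.integral_of_le ht.le, integral_Ioc_eq_integral_Ioo,
    ← integral_const_mul]
  refine strictAntiOn_integral_of_ae hμ (fun s hs => ?_) ?_
  · exact ((intervalIntegrable_iff_integrableOn_Ioo_of_le ht.le).1 (hint s hs)).const_mul _
  · filter_upwards [ae_restrict_mem measurableSet_Ioo] with x hx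
    simp only [mul_left_comm _ (w x)]
    exact ((strictAnti_rpow_neg_mul_rpow hx).const_mul (hw x hx)).strictAntiOn S

theorem rpow_mul_I_strictAntiOn_general (t : ℝ) (ht : 0 < t) :
    StrictAntiOn (fun s : ℝ => t ^ (-s) * ∫ x in (0 : ℝ)..t, Real.exp (x - t) * x ^ s)
      (Ioi (-1 : ℝ)) := by
  refine strictAntiOn_rpow_neg_mul_integral_mul_rpow ht (fun x _ => Real.exp_pos (x - t))
    fun s hs => ?_
  exact (intervalIntegral.intervalIntegrable_rpow' hs).continuousOn_mul
    (Continuous.continuousOn (by fun_prop))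

/-- For fixed `t > 0`, with `I(s, t) = ∫_0^t e^{x-t} x^s dx`, the function
`s ↦ t^{-s} I(s, t)` is decreasing on `(0, ∞)`. -/
theorem rpow_mul_I_strictAntiOn (t : ℝ) (ht : 0 < t) :
    StrictAntiOn (fun s : ℝ => t ^ (-s) * ∫ x in (0 : ℝ)..t, Real.exp (x - t) * x ^ s)
      (Set.Ioi (0 : ℝ)) :=
  (rpow_mul_I_strictAntiOn_general t ht).mono (Ioi_subset_Ioi (by norm_num))
end

section
/- Let q ≥ 2, r ≥ 2·e·W(1/e) and t = r·q/e. Then t^{−q}·∫_0^t e^{x−t}·x^q dx ≥ 1/9. -/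
/-!
Taking `u = x / t` in `u ≤ exp (u - 1)` and raising to the power `t` gives
`(x / t) ^ t ≤ exp (x - t)` on `[0, t]`. This replaces the integrand by a pure power, so
`t ^ (-q) * ∫ x in 0..t, exp (x - t) * x ^ q ≥ t / (t + q + 1)`, which is at least `1 / 9` as soon
as `q + 1 ≤ 8 * t`. The bound `w * exp w * exp (-(w * exp w)) ≤ w` gives
`W(1/e) > exp (-2) > 1 / 9`, hence `t > 2 * q / 9` and, as `2 ≤ q`, `8 * t > q + 1`.
-/

open Real intervalIntegral MeasureTheory

lemma div_rpow_self_le_exp_sub {x t : ℝ} (hx : 0 ≤ x) (ht : 0 < t) :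
    (x / t) ^ t ≤ exp (x - t) := by
  have hbase : x / t ≤ exp (x / t - 1) := by linarith [add_one_le_exp (x / t - 1)]
  calc (x / t) ^ t ≤ exp (x / t - 1) ^ t := by gcongr
    _ = exp (x - t) := by rw [← exp_mul, sub_mul, div_mul_cancel₀ _ ht.ne', one_mul]

lemma integral_div_rpow_mul_rpow {p q t : ℝ} (hpq : -1 < p + q) (ht : 0 < t) :
    ∫ x in (0 : ℝ)..t, (x / t) ^ p * x ^ q = t ^ q * (t / (p + q + 1)) := by
  have hpow : Set.EqOn (fun x : ℝ => (x / t) ^ p * x ^ q) (fun x => x ^ (p + q) / t ^ p)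
      (Set.Ioo 0 t) := fun x hx => by
    simp only [div_rpow hx.1.le ht.le, rpow_add hx.1, div_mul_eq_mul_div]
  rw [integral_congr_Ioo_of_le ht.le hpow, intervalIntegral.integral_div,
    integral_rpow (Or.inl hpq), zero_rpow (by linarith), sub_zero, rpow_add_one ht.ne',
    rpow_add ht]
  field_simp

theorem div_add_add_one_le_rpow_neg_mul_integral {q t : ℝ} (hq : -1 < q) (ht : 0 < t) :
    t / (t + q + 1) ≤ t ^ (-q) * ∫ x in (0 : ℝ)..t, exp (x - t) * x ^ q := by
  have hint_pow : IntervalIntegrable (fun x : ℝ => (x / t) ^ t * x ^ q) volume 0 t :=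
    (intervalIntegrable_rpow' hq).continuousOn_mul
      ((continuous_rpow_const ht.le).comp (continuous_id.div_const t)).continuousOn
  have hint_exp : IntervalIntegrable (fun x : ℝ => exp (x - t) * x ^ q) volume 0 t :=
    (intervalIntegrable_rpow' hq).continuousOn_mul (by fun_prop)
  rw [rpow_neg ht.le, le_inv_mul_iff₀ (rpow_pos_of_pos ht q)]
  calc t ^ q * (t / (t + q + 1)) = ∫ x in (0 : ℝ)..t, (x / t) ^ t * x ^ q :=
        (integral_div_rpow_mul_rpow (by linarith) ht).symm
    _ ≤ ∫ x in (0 : ℝ)..t, exp (x - t) * x ^ q :=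
        integral_mono_on ht.le hint_pow hint_exp fun x hx =>
          mul_le_mul_of_nonneg_right (div_rpow_self_le_exp_sub hx.1 ht) (rpow_nonneg hx.1 q)

lemma mul_exp_mul_exp_neg_mul_exp_le {w : ℝ} (hw : 0 ≤ w) :
    w * exp w * exp (-(w * exp w)) ≤ w := by
  have hle : w ≤ w * exp w := le_mul_of_one_le_right hw (one_le_exp hw)
  rw [mul_assoc, ← exp_add]
  exact mul_le_of_le_one_right hw (exp_le_one_iff.mpr (by linarith))

lemma one_ninth_lt_of_mul_exp_eq_exp_neg_one {w : ℝ} (hw : 0 ≤ w)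
    (hwe : w * exp w = exp (-1)) : 1 / 9 < w := by
  have hexp_neg_two : 1 / 9 < exp (-2) := by
    have hexp_two : exp 2 = exp 1 ^ 2 := by rw [← exp_nat_mul]; norm_num
    rw [exp_neg, ← one_div, hexp_two]
    gcongr
    nlinarith [exp_one_lt_three, exp_pos 1]
  calc 1 / 9 < exp (-2) := hexp_neg_two
    _ ≤ exp (-1) * exp (-exp (-1)) := by
      rw [← exp_add]
      gcongr
      linarith [exp_le_one_iff.mpr (by norm_num : (-1 : ℝ) ≤ 0)]
    _ ≤ w := hwe ▸ mul_exp_mul_exp_neg_mul_exp_le hw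

lemma two_ninths_mul_le_of_mul_exp_eq {w q r : ℝ} (hw : 0 ≤ w) (hwe : w * exp w = exp (-1))
    (hq : 0 ≤ q) (hr : 2 * (exp 1 * w) ≤ r) : 2 / 9 * q ≤ r * q / exp 1 := by
  have hw_lt : 1 / 9 < w := one_ninth_lt_of_mul_exp_eq_exp_neg_one hw hwe
  have hw_le : 2 * w ≤ r / exp 1 := by
    rw [le_div_iff₀ (exp_pos 1)]
    linarith
  rw [mul_div_right_comm]
  exact mul_le_mul_of_nonneg_right (by linarith) hq

theorem alpha_ge_one_ninth_general {q t : ℝ} (hq : -1 < q) (hqt : q + 1 ≤ 8 * t) :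
    1 / 9 ≤ t ^ (-q) * ∫ x in (0 : ℝ)..t, exp (x - t) * x ^ q := by
  have ht : 0 < t := by linarith
  refine le_trans ?_ (div_add_add_one_le_rpow_neg_mul_integral hq ht)
  rw [div_le_div_iff₀ (by norm_num) (by linarith)]
  linarith

/-- If `q ≥ 2`, `r ≥ 2 e W(1/e)` and `t = r q / e`, then
`t^{-q} ∫_0^t e^{x-t} x^q dx ≥ 1/9`. -/
theorem alpha_ge_one_ninth
    (w : ℝ) (hw : 0 < w) (hwe : w * Real.exp w = Real.exp (-1))
    (q r t : ℝ) (hq : 2 ≤ q) (hr : 2 * (Real.exp 1 * w) ≤ r)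
    (ht : t = r * q / Real.exp 1) :
    (1 : ℝ) / 9 ≤ t ^ (-q) * ∫ x in (0 : ℝ)..t, Real.exp (x - t) * x ^ q :=
  alpha_ge_one_ninth_general (by linarith)
    (by linarith [two_ninths_mul_le_of_mul_exp_eq hw.le hwe (by linarith : 0 ≤ q) hr])
end

section
/- Let q ≥ 2, r ≥ 2·e·W(1/e), t = r·q/e, and set α = t^{−q}·∫_0^t e^{x−t}·x^q dx and g(q) = Γ(q+1)·(q/e)^{−q}. Then C₀^q·(α·r^q + e^{−r·q/e}·g(q)) ≥ 1, where C₀ = e^{W(1/e)}. -/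
/-!
Put `a = w q`. Since `C₀ = 1 / (e w)`, the left-hand side equals `F t / (a ^ q e ^ t)`, where
`F t = ∫₀ᵗ e ^ x x ^ q dx + Γ(q + 1)`. The derivative of `F t - a ^ q e ^ t` is
`e ^ t (t ^ q - a ^ q)`, so this difference is smallest at `t = a`. It is nonnegative there
because `a ^ q e ^ a = q ^ q e ^ (-q)` by the equation defining `w`, and
`q ^ q e ^ (-q) ≤ Γ(q + 1)`.
-/

open Real Set MeasureTheory

lemma rpow_mul_exp_neg_le_Gamma_add_one {a q : ℝ} (ha : 0 ≤ a) (hq : 0 ≤ q) :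
    a ^ q * exp (-a) ≤ Gamma (q + 1) := by
  have h_int : IntegrableOn (fun x : ℝ ↦ exp (-x) * x ^ q) (Ioi 0) := by
    simpa only [add_sub_cancel_right] using GammaIntegral_convergent (s := q + 1) (by linarith)
  have h_subset : Ioi a ⊆ Ioi 0 := Ioi_subset_Ioi ha
  calc a ^ q * exp (-a) = ∫ x in Ioi a, exp (-x) * a ^ q := by
        rw [integral_mul_const, integral_exp_neg_Ioi, mul_comm]
    _ ≤ ∫ x in Ioi a, exp (-x) * x ^ q := by
        refine setIntegral_mono_on ((integrableOn_exp_neg_Ioi a).mul_const _)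
          (h_int.mono_set h_subset) measurableSet_Ioi fun x hx ↦ ?_
        have hax : a ≤ x := le_of_lt hx
        gcongr
    _ ≤ ∫ x in Ioi 0, exp (-x) * x ^ q := by
        refine setIntegral_mono_set h_int ?_ h_subset.eventuallyLE
        filter_upwards [ae_restrict_mem measurableSet_Ioi] with x hx
        exact mul_nonneg (exp_nonneg _) (rpow_nonneg (le_of_lt hx) q)
    _ = Gamma (q + 1) := by
        rw [Gamma_eq_integral (by linarith), add_sub_cancel_right]

lemma integral_mul_le_integral_mul_of_monotoneOn {f g : ℝ → ℝ} {a b : ℝ}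
    (hf : MonotoneOn f (uIcc a b)) (hg : ContinuousOn g (uIcc a b))
    (hg_nonneg : ∀ x ∈ uIcc a b, 0 ≤ g x) :
    (∫ x in a..b, g x) * f a ≤ ∫ x in a..b, g x * f x := by
  have h_const : IntervalIntegrable (fun x ↦ g x * f a) volume a b :=
    hg.intervalIntegrable.mul_const _
  have h_mul : IntervalIntegrable (fun x ↦ g x * f x) volume a b :=
    hf.intervalIntegrable.continuousOn_mul hg
  rw [← intervalIntegral.integral_mul_const]
  rcases le_total a b with hab | hba
  · refine intervalIntegral.integral_mono_on hab h_const h_mul fun x hx ↦ ?_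
    rw [← uIcc_of_le hab] at hx
    exact mul_le_mul_of_nonneg_left (hf left_mem_uIcc hx (uIcc_of_le hab ▸ hx).1)
      (hg_nonneg x hx)
  · rw [intervalIntegral.integral_symm b a, intervalIntegral.integral_symm b a, neg_le_neg_iff]
    refine intervalIntegral.integral_mono_on hba h_mul.symm h_const.symm fun x hx ↦ ?_
    rw [← uIcc_of_ge hba] at hx
    exact mul_le_mul_of_nonneg_left (hf hx left_mem_uIcc (uIcc_of_ge hba ▸ hx).2)
      (hg_nonneg x hx)

lemma rpow_mul_exp_sub_exp_le_integral {a q t : ℝ} (ha : 0 ≤ a) (hq : 0 ≤ q) (ht : 0 ≤ t) :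
    a ^ q * (exp t - exp a) ≤ ∫ x in (0 : ℝ)..t, exp x * x ^ q := by
  have h_int (u v : ℝ) : IntervalIntegrable (fun x : ℝ ↦ exp x * x ^ q) volume u v :=
    (continuous_exp.mul (continuous_rpow_const hq)).intervalIntegrable u v
  have h_nonneg : 0 ≤ ∫ x in (0 : ℝ)..a, exp x * x ^ q :=
    intervalIntegral.integral_nonneg ha fun x hx ↦
      mul_nonneg (exp_nonneg x) (rpow_nonneg hx.1 q)
  have h_mono : MonotoneOn (fun x : ℝ ↦ x ^ q) (uIcc a t) := fun x hx y _ hxy ↦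
    rpow_le_rpow ((le_min ha ht).trans hx.1) hxy hq
  calc a ^ q * (exp t - exp a) = (∫ x in a..t, exp x) * a ^ q := by
        rw [integral_exp, mul_comm]
    _ ≤ ∫ x in a..t, exp x * x ^ q :=
        integral_mul_le_integral_mul_of_monotoneOn h_mono continuousOn_exp
          fun x _ ↦ exp_nonneg x
    _ ≤ ∫ x in (0 : ℝ)..t, exp x * x ^ q := by
        rw [← intervalIntegral.integral_add_adjacent_intervals (h_int 0 a) (h_int a t)]
        exact le_add_of_nonneg_left h_nonneg

lemma mul_rpow_mul_exp_mul {c x : ℝ} (hc : 0 ≤ c) (hx : 0 ≤ x) (q : ℝ) :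
    (c * x) ^ q * exp (c * q) = x ^ q * (c * exp c) ^ q := by
  rw [mul_rpow hc hx, mul_rpow hc (exp_nonneg c), exp_mul]
  ring

lemma mul_rpow_mul_exp_le_integral_add_Gamma {w q t : ℝ} (hw : 0 ≤ w)
    (hwe : w * exp w ≤ exp (-1)) (hq : 0 ≤ q) (ht : 0 ≤ t) :
    (w * q) ^ q * exp t ≤ (∫ x in (0 : ℝ)..t, exp x * x ^ q) + Gamma (q + 1) := by
  have h_minimum : (w * q) ^ q * exp (w * q) ≤ Gamma (q + 1) :=
    calc (w * q) ^ q * exp (w * q) = q ^ q * (w * exp w) ^ q := mul_rpow_mul_exp_mul hw hq q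
      _ ≤ q ^ q * exp (-1) ^ q := by gcongr
      _ = q ^ q * exp (-q) := by rw [← exp_mul, neg_one_mul]
      _ ≤ Gamma (q + 1) := rpow_mul_exp_neg_le_Gamma_add_one hq hq
  linarith [rpow_mul_exp_sub_exp_le_integral (mul_nonneg hw hq) hq ht]

lemma integral_exp_sub_mul (f : ℝ → ℝ) (a b c : ℝ) :
    ∫ x in a..b, exp (x - c) * f x = exp (-c) * ∫ x in a..b, exp x * f x := by
  rw [← intervalIntegral.integral_const_mul]
  congr with x
  rw [sub_eq_neg_add, exp_add, mul_assoc]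

lemma mul_rpow_neg_mul_rpow {r s : ℝ} (hr : 0 < r) (hs : 0 ≤ s) (q : ℝ) :
    (r * s) ^ (-q) * r ^ q = s ^ (-q) := by
  rw [mul_rpow hr.le hs, mul_right_comm, ← rpow_add hr, neg_add_cancel, rpow_zero, one_mul]

lemma exp_rpow_mul_div_exp_one_rpow_neg {w x : ℝ} (hwe : w * exp w = exp (-1))
    (hx : 0 ≤ x) (q : ℝ) :
    exp w ^ q * (x / exp 1) ^ (-q) = (w * x) ^ (-q) := by
  have hw : 0 < w := pos_of_mul_pos_left (hwe ▸ exp_pos (-1)) (exp_nonneg w)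
  have h_base : x / exp 1 = exp w * (w * x) := by
    rw [div_eq_mul_inv, ← exp_neg, ← hwe]
    ring
  rw [h_base, mul_comm, mul_rpow_neg_mul_rpow (exp_pos w) (mul_nonneg hw.le hx)]

theorem rhs_ge_one_general
    (w : ℝ) (hw : 0 < w) (hwe : w * Real.exp w = Real.exp (-1))
    (q r t α : ℝ) (hq : 0 < q) (hr : 0 < r)
    (ht : t = r * q / Real.exp 1)
    (hα : α = t ^ (-q) * ∫ x in (0 : ℝ)..t, Real.exp (x - t) * x ^ q) :
    1 ≤ Real.exp w ^ q *
      (α * r ^ q + Real.exp (-(r * q / Real.exp 1)) *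
        (Real.Gamma (q + 1) * (q / Real.exp 1) ^ (-q))) := by
  have hs : t = r * (q / exp 1) := by rw [ht, mul_div_assoc]
  have ht_nonneg : 0 ≤ t := by rw [ht]; positivity
  have h_scale : t ^ (-q) * r ^ q = (q / exp 1) ^ (-q) := by
    rw [hs, mul_rpow_neg_mul_rpow hr (by positivity)]
  have h_const : exp w ^ q * (q / exp 1) ^ (-q) = ((w * q) ^ q)⁻¹ := by
    rw [exp_rpow_mul_div_exp_one_rpow_neg hwe hq.le, rpow_neg (by positivity)]
  rw [← ht, hα, integral_exp_sub_mul]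
  set E := ∫ x in (0 : ℝ)..t, exp x * x ^ q
  calc 1 ≤ ((w * q) ^ q * exp t)⁻¹ * (E + Gamma (q + 1)) := by
        rw [← div_eq_inv_mul, one_le_div₀ (by positivity)]
        exact mul_rpow_mul_exp_le_integral_add_Gamma hw.le hwe.le hq.le ht_nonneg
    _ = exp w ^ q * (q / exp 1) ^ (-q) * exp (-t) * (E + Gamma (q + 1)) := by
        rw [h_const, exp_neg, mul_inv]
    _ = exp w ^ q * (t ^ (-q) * (exp (-t) * E) * r ^ q +
          exp (-t) * (Gamma (q + 1) * (q / exp 1) ^ (-q))) := by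
        rw [← h_scale]
        ring

/-- If `q ≥ 2`, `r ≥ 2 e W(1/e)`, `t = r q / e`,
`α = t^{-q} ∫_0^t e^{x-t} x^q dx` and `g(q) = Γ(q+1) (q/e)^{-q}`, then
`C₀^q (α r^q + e^{-rq/e} g(q)) ≥ 1`, where `C₀ = e^{W(1/e)}`. -/
theorem rhs_ge_one
    (w : ℝ) (hw : 0 < w) (hwe : w * Real.exp w = Real.exp (-1))
    (q r t α : ℝ) (hq : 2 ≤ q) (hr : 2 * (Real.exp 1 * w) ≤ r)
    (ht : t = r * q / Real.exp 1)
    (hα : α = t ^ (-q) * ∫ x in (0 : ℝ)..t, Real.exp (x - t) * x ^ q) :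
    1 ≤ Real.exp w ^ q *
      (α * r ^ q + Real.exp (-(r * q / Real.exp 1)) *
        (Real.Gamma (q + 1) * (q / Real.exp 1) ^ (-q))) :=
  rhs_ge_one_general w hw hwe q r t α (by linarith)
    (lt_of_lt_of_le (by positivity) hr) ht hα
end

section
/- Fix q > 0 and let M_q be the unique positive real number satisfying M_q^{q+1} − (q+1)·M_q − q = 0. If X is a random variable with density 1_{[−a,b]}(x)·e^{αx+β} for some a, b > 0, α ≥ 0, β ∈ ℝ, and ‖X‖_q = 1, then b ≤ M_q. -/
open MeasureTheory

/-!
If the density `f` of `X` is monotone on `(-∞, b]` and `b ≥ 1`, then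
`f 1 * 1_{[-1,b]}(x) (|x|^q - 1) ≤ f x * (|x|^q - 1)` for every `x`, because the sign of
`|x|^q - 1` changes exactly at `|x| = 1`. Integrating,
`f 1 * ∫_{-1}^b (|x|^q - 1) dx ≤ E|X|^q - 1 ≤ 0`. Here `f 1 > 0`, as otherwise `X > 1` almost
surely, so the integral on the left is nonpositive. It equals `(b^{q+1} - (q+1) b - q) / (q+1)`,
whose numerator is convex in `b` and negative at `0`, hence positive beyond its zero `M`.
-/

open Set
open scoped NNReal

lemma monotoneOn_indicator_Icc {α β : Type*} [Preorder α] [Preorder β] [Zero β] {a b : α}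
    {g : α → β} (hg : MonotoneOn g (Icc a b)) (hg0 : ∀ x ∈ Icc a b, 0 ≤ g x) :
    MonotoneOn ((Icc a b).indicator g) (Iic b) := by
  intro x _ y hy hxy
  by_cases hx : x ∈ Icc a b
  · have hy' : y ∈ Icc a b := ⟨hx.1.trans hxy, hy⟩
    simpa only [indicator_of_mem hx, indicator_of_mem hy'] using hg hx hy' hxy
  · rw [indicator_of_notMem hx]
    exact indicator_apply_nonneg (hg0 y)

lemma integrable_and_integral_eq_one_of_rpow_eq_one {Ω : Type*} [MeasurableSpace Ω] {μ : Measure Ω}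
    {g : Ω → ℝ} {r : ℝ} (hg : 0 ≤ g) (hr : r ≠ 0) (h : (∫ x, g x ∂μ) ^ r = 1) :
    Integrable g μ ∧ ∫ x, g x ∂μ = 1 := by
  have hone : ∫ x, g x ∂μ = 1 :=
    (Real.rpow_left_inj (integral_nonneg hg) zero_le_one hr).mp (by rw [h, Real.one_rpow])
  exact ⟨.of_integral_ne_zero (by simp [hone]), hone⟩

/-- The function `x ↦ x^{q+1} - (q+1) x - q` whose positive zero is the constant `M_q`. For `x ≥ 0`
it is `q + 1` times the integral of `|t|^q - 1` over `[-1, x]`, the scaling being chosen so that no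
division is needed. -/
noncomputable def momentExcess (q x : ℝ) : ℝ :=
  x ^ (q + 1) - (q + 1) * x - q

section MomentExcess

variable {q b M : ℝ}

lemma convexOn_momentExcess (hq : 0 ≤ q) : ConvexOn ℝ (Ici 0) (momentExcess q) := by
  have hlin : ConcaveOn ℝ (Ici (0 : ℝ)) fun x ↦ (q + 1) * x :=
    (concaveOn_id (convex_Ici 0)).smul (by linarith)
  have hpow : ConvexOn ℝ (Ici (0 : ℝ)) fun x ↦ x ^ (q + 1) := convexOn_rpow (by linarith)
  exact (hpow.sub hlin).add_const (-q)

lemma momentExcess_zero (hq : q + 1 ≠ 0) : momentExcess q 0 = -q := by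
  simp [momentExcess, Real.zero_rpow hq]

lemma momentExcess_one : momentExcess q 1 = -2 * q := by
  simp only [momentExcess, Real.one_rpow]
  ring

lemma momentExcess_pos_of_lt (hq : 0 < q) (hM : 0 < M) (hroot : momentExcess q M = 0)
    (hMb : M < b) : 0 < momentExcess q b := by
  have hb : 0 < b := hM.trans hMb
  have hmem : M ∈ openSegment ℝ 0 b := by
    rw [openSegment_eq_Ioo hb]
    exact ⟨hM, hMb⟩
  have hneg : momentExcess q 0 < momentExcess q M := by
    rw [momentExcess_zero (by linarith), hroot]
    linarith
  exact hroot ▸ (convexOn_momentExcess hq.le).lt_right_of_left_lt self_mem_Ici hb.le hmem hneg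

lemma one_lt_of_momentExcess_eq_zero (hq : 0 < q) (hM : 0 < M) (hroot : momentExcess q M = 0) :
    1 < M := by
  by_contra! hM1
  have hnonneg : 0 ≤ momentExcess q 1 := by
    rcases hM1.eq_or_lt with rfl | hlt
    · exact hroot.ge
    · exact (momentExcess_pos_of_lt hq hM hroot hlt).le
  rw [momentExcess_one] at hnonneg
  linarith

end MomentExcess

section AbsRpow

variable {q a b : ℝ}

lemma intervalIntegrable_abs_rpow_zero_left (hq : -1 < q) (hb : 0 ≤ b) :
    IntervalIntegrable (fun x ↦ |x| ^ q) volume 0 b := by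
  refine (intervalIntegral.intervalIntegrable_rpow' hq).congr fun x hx ↦ ?_
  rw [uIoc_of_le hb] at hx
  simp only [abs_of_pos hx.1]

lemma integral_abs_rpow_zero_left (hq : -1 < q) (hb : 0 ≤ b) :
    ∫ x in (0)..b, |x| ^ q = b ^ (q + 1) / (q + 1) := by
  have habs : EqOn (fun x : ℝ ↦ |x| ^ q) (fun x ↦ x ^ q) (uIcc 0 b) := fun x hx ↦ by
    rw [uIcc_of_le hb] at hx
    simp only [abs_of_nonneg hx.1]
  rw [intervalIntegral.integral_congr habs, integral_rpow (.inl hq),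
    Real.zero_rpow (by linarith), sub_zero]

lemma intervalIntegrable_abs_rpow_neg_left (hq : -1 < q) (ha : 0 ≤ a) (hb : 0 ≤ b) :
    IntervalIntegrable (fun x ↦ |x| ^ q) volume (-a) b := by
  have hneg : IntervalIntegrable (fun x ↦ |x| ^ q) volume (-a) 0 := by
    simpa using ((IntervalIntegrable.iff_comp_neg).mp
      (intervalIntegrable_abs_rpow_zero_left hq ha)).symm
  exact hneg.trans (intervalIntegrable_abs_rpow_zero_left hq hb)

lemma integral_abs_rpow_neg_left (hq : -1 < q) (ha : 0 ≤ a) (hb : 0 ≤ b) :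
    ∫ x in (-a)..b, |x| ^ q = (a ^ (q + 1) + b ^ (q + 1)) / (q + 1) := by
  have hreflect : ∫ x in (-a)..0, |x| ^ q = ∫ x in (0)..a, |x| ^ q := by
    simpa using (intervalIntegral.integral_comp_neg (a := 0) (b := a) fun x ↦ |x| ^ q).symm
  have hleft := intervalIntegrable_abs_rpow_neg_left hq ha le_rfl
  rw [← intervalIntegral.integral_add_adjacent_intervals hleft
      (intervalIntegrable_abs_rpow_zero_left hq hb),
    hreflect, integral_abs_rpow_zero_left hq ha, integral_abs_rpow_zero_left hq hb, add_div]

lemma integral_abs_rpow_sub_one (hq : -1 < q) (hb : 0 ≤ b) :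
    ∫ x in (-1)..b, (|x| ^ q - 1) = momentExcess q b / (q + 1) := by
  have hq' : q + 1 ≠ 0 := by linarith
  rw [intervalIntegral.integral_sub (intervalIntegrable_abs_rpow_neg_left hq zero_le_one hb)
      intervalIntegrable_const, integral_abs_rpow_neg_left hq zero_le_one hb,
    intervalIntegral.integral_const, Real.one_rpow, smul_eq_mul, momentExcess]
  field_simp
  ring

end AbsRpow

section MonotoneDensity

variable {q b M : ℝ} {f : ℝ → ℝ≥0}

lemma indicator_mul_abs_rpow_sub_one_le (hq : 0 ≤ q) (hb : 1 ≤ b) (hf : MonotoneOn f (Iic b))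
    (x : ℝ) :
    (Icc (-1) b).indicator (fun x ↦ f 1 * (|x| ^ q - 1)) x ≤ f x * (|x| ^ q - 1) := by
  have hpos (h : 1 ≤ |x|) : 0 ≤ |x| ^ q - 1 := sub_nonneg.mpr (Real.one_le_rpow h hq)
  by_cases hx : x ∈ Icc (-1) b
  · rw [indicator_of_mem hx]
    rcases le_total x 1 with hx1 | hx1
    · have hneg : |x| ^ q - 1 ≤ 0 :=
        sub_nonpos.mpr (Real.rpow_le_one (abs_nonneg x) (abs_le.mpr ⟨hx.1, hx1⟩) hq)
      exact mul_le_mul_of_nonpos_right (hf hx.2 hb hx1) hneg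
    · exact mul_le_mul_of_nonneg_right (hf hb hx.2 hx1) (hpos (hx1.trans (le_abs_self x)))
  · rw [indicator_of_notMem hx]
    have habs : 1 ≤ |x| := by
      by_contra! h
      exact hx ⟨(abs_lt.mp h).1.le, (abs_lt.mp h).2.le.trans hb⟩
    exact mul_nonneg (f x).2 (hpos habs)

lemma mul_momentExcess_le_integral (hq : 0 ≤ q) (hb : 1 ≤ b) (hf : MonotoneOn f (Iic b))
    (hfm : AEMeasurable f)
    (hint : Integrable (fun x ↦ |x| ^ q - 1) (volume.withDensity fun x ↦ f x)) :
    f 1 * (momentExcess q b / (q + 1))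
      ≤ ∫ x, (|x| ^ q - 1) ∂(volume.withDensity fun x ↦ f x) := by
  have hcont : Continuous fun x : ℝ ↦ |x| ^ q - 1 :=
    (continuous_abs.rpow_const fun _ ↦ .inr hq).sub continuous_const
  calc f 1 * (momentExcess q b / (q + 1))
      = ∫ x in (-1)..b, f 1 * (|x| ^ q - 1) := by
        rw [← integral_abs_rpow_sub_one (by linarith) (by linarith),
          intervalIntegral.integral_const_mul]
    _ = ∫ x, (Icc (-1) b).indicator (fun x ↦ f 1 * (|x| ^ q - 1)) x := by
        rw [integral_indicator measurableSet_Icc, integral_Icc_eq_integral_Ioc,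
          intervalIntegral.integral_of_le (by linarith)]
    _ ≤ ∫ x, f x * (|x| ^ q - 1) :=
        integral_mono ((hcont.const_mul (f 1 : ℝ)).integrableOn_Icc.integrable_indicator
            measurableSet_Icc)
          ((integrable_withDensity_iff_integrable_smul₀ hfm).mp hint)
          (indicator_mul_abs_rpow_sub_one_le hq hb hf)
    _ = ∫ x, (|x| ^ q - 1) ∂(volume.withDensity fun x ↦ f x) :=
        (integral_withDensity_eq_integral_smul₀ hfm _).symm

lemma density_one_pos_of_integral_abs_rpow_le_one (hq : 0 < q) (hb : 1 ≤ b)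
    (hf : MonotoneOn f (Iic b)) (hfm : AEMeasurable f)
    [IsProbabilityMeasure (volume.withDensity fun x ↦ (f x : ENNReal))]
    (hint : Integrable (fun x ↦ |x| ^ q) (volume.withDensity fun x ↦ f x))
    (hmoment : ∫ x, |x| ^ q ∂(volume.withDensity fun x ↦ f x) ≤ 1) :
    0 < f 1 := by
  have hae : ∀ᵐ x ∂(volume.withDensity fun x ↦ f x), f x ≠ 0 :=
    (ae_withDensity_iff' hfm.coe_nnreal_ennreal).mpr (.of_forall fun x ↦ ENNReal.coe_ne_zero.mp)
  obtain ⟨x, hx, hle⟩ := exists_notMem_null_le_integral hint hae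
  have hfx : f x ≠ 0 := by simpa using hx
  have hx1 : x ≤ 1 := by
    by_contra! h
    exact (Real.one_lt_rpow (h.trans_le (le_abs_self x)) hq).not_ge (hle.trans hmoment)
  exact (pos_iff_ne_zero.mpr hfx).trans_le (hf (hx1.trans hb) hb hx1)

theorem b_le_M_general (hq : 0 < q) (hM : 0 < M) (hroot : M ^ (q + 1) - (q + 1) * M - q = 0)
    (hf : MonotoneOn f (Iic b)) (hfm : AEMeasurable f)
    (hprob : IsProbabilityMeasure (volume.withDensity fun x ↦ (f x : ENNReal)))
    (hint : Integrable (fun x ↦ |x| ^ q) (volume.withDensity fun x ↦ f x))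
    (hmoment : ∫ x, |x| ^ q ∂(volume.withDensity fun x ↦ f x) ≤ 1) :
    b ≤ M := by
  by_contra! hMb
  have hb : 1 ≤ b := (one_lt_of_momentExcess_eq_zero hq hM hroot).le.trans hMb.le
  have hexcess : 0 < momentExcess q b := momentExcess_pos_of_lt hq hM hroot hMb
  have hf1 : 0 < f 1 := density_one_pos_of_integral_abs_rpow_le_one hq hb hf hfm hint hmoment
  have hupper : f 1 * (momentExcess q b / (q + 1)) ≤ 0 :=
    calc f 1 * (momentExcess q b / (q + 1))
        ≤ ∫ x, (|x| ^ q - 1) ∂(volume.withDensity fun x ↦ f x) :=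
          mul_momentExcess_le_integral hq.le hb hf hfm (hint.sub (integrable_const 1))
      _ = ∫ x, |x| ^ q ∂(volume.withDensity fun x ↦ f x) - 1 := by
          rw [integral_sub hint (integrable_const 1)]
          simp
      _ ≤ 0 := sub_nonpos.mpr hmoment
  exact hupper.not_gt (by positivity)

end MonotoneDensity

/-- Fix `q > 0` and let `M` be the (unique) positive real with
`M^{q+1} - (q+1) M - q = 0`. If `X` is a random variable with density
`1_{[-a,b]}(x) e^{αx+β}` for some `a, b > 0`, `α ≥ 0`, `β ∈ ℝ`, and `‖X‖_q = 1`,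
then `b ≤ M`. -/
theorem b_le_M (q M a b α β : ℝ) (hq : 0 < q) (hM : 0 < M)
    (hMroot : M ^ (q + 1) - (q + 1) * M - q = 0)
    (ha : 0 < a) (hb : 0 < b) (hα : 0 ≤ α)
    (hprob : IsProbabilityMeasure
      (volume.withDensity (fun x => ENNReal.ofReal
        (Set.indicator (Set.Icc (-a) b) (fun x => Real.exp (α * x + β)) x))))
    (hnorm : (∫ x, |x| ^ q
        ∂(volume.withDensity (fun x => ENNReal.ofReal
          (Set.indicator (Set.Icc (-a) b) (fun x => Real.exp (α * x + β)) x)))) ^ (1 / q)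
      = 1) :
    b ≤ M := by
  have hexp : Monotone fun x ↦ Real.exp (α * x + β) := fun x y hxy ↦ by dsimp only; gcongr
  have hmono : MonotoneOn ((Icc (-a) b).indicator fun x ↦ Real.exp (α * x + β)) (Iic b) :=
    monotoneOn_indicator_Icc (hexp.monotoneOn _) fun x _ ↦ (Real.exp_pos _).le
  have hmeas : Measurable ((Icc (-a) b).indicator fun x ↦ Real.exp (α * x + β)) :=
    Measurable.indicator (by fun_prop) measurableSet_Icc
  obtain ⟨hint, hmoment⟩ := integrable_and_integral_eq_one_of_rpow_eq_one
    (fun x ↦ by positivity) (one_div_ne_zero hq.ne') hnorm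
  exact b_le_M_general hq hM hMroot (Real.toNNReal_monotone.comp_monotoneOn hmono)
    hmeas.real_toNNReal.aemeasurable hprob hint hmoment.le
end
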